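/- arXiv:1504.02418 — 8 statements merged into one kernel-verified Lean document; each statement's English description precedes it below -/
import Mathlib

section
/- Let G=(V,E,σ) be a finite weighted graph, let Γ be a nonempty family of walks on G, and let 1 ≤ p ≤ ∞. Then there exists an extremal density ρ* ∈ A(Γ), i.e. an admissible density with ℰ_p(ρ*) = Mod_p(Γ) (the infimum defining the p-modulus is attained). -/
/-!
Existence of extremal densities is the direct method in the finite-dimensional space `E → ℝ`.
The admissible set is closed, being cut out by non-strict linear inequalities, and it contains the
constant density `1`, since a walk with at least one step traverses some edge. Both energies are
continuous and coercive: a bound on `ℰ_p ρ` bounds every coordinate of `ρ`, because the weights are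
positive and `x ≤ x ^ p` for `1 ≤ x` and `1 ≤ p`, while `ℰ_∞` is the sup norm. Hence the search for
a minimum is confined to a compact set, where the extreme value theorem applies.
-/

open scoped BigOperators

variable {V : Type*} [Fintype V] [DecidableEq V]

/-- The ρ-length of a walk: ℓ_ρ(γ) = Σ_{e∈E} N(γ,e) ρ(e), where N(γ,e) is the number
of times the walk γ traverses the edge e. -/
noncomputable def rhoLength (G : SimpleGraph V) [DecidableRel G.Adj]
    (ρ : G.edgeSet → ℝ) {u v : V} (w : G.Walk u v) : ℝ :=
  ∑ e : G.edgeSet, (w.edges.count ↑e : ℝ) * ρ e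

/-- The admissible set A(Γ): densities that are nonnegative and give every walk of Γ
ρ-length at least one. -/
def IsAdmissible (G : SimpleGraph V) [DecidableRel G.Adj]
    (Γ : Set (Σ (u : V) (v : V), G.Walk u v)) (ρ : G.edgeSet → ℝ) : Prop :=
  (∀ e, 0 ≤ ρ e) ∧ ∀ γ ∈ Γ, 1 ≤ rhoLength G ρ γ.2.2

/-- The p-energy ℰ_p(ρ) = Σ_{e∈E} σ(e) |ρ(e)|^p, for 1 ≤ p < ∞. -/
noncomputable def energy (G : SimpleGraph V) [DecidableRel G.Adj]
    (σ : G.edgeSet → ℝ) (p : ℝ) (ρ : G.edgeSet → ℝ) : ℝ :=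
  ∑ e : G.edgeSet, σ e * |ρ e| ^ p

/-- The ∞-energy ℰ_∞(ρ) = max_{e∈E} |ρ(e)|. -/
noncomputable def energyInf (G : SimpleGraph V) [DecidableRel G.Adj]
    (ρ : G.edgeSet → ℝ) : ℝ :=
  ⨆ e : G.edgeSet, |ρ e|

/-- The p-modulus Mod_p(Γ) = inf_{ρ ∈ A(Γ)} ℰ_p(ρ), for 1 ≤ p < ∞. -/
noncomputable def modulus (G : SimpleGraph V) [DecidableRel G.Adj]
    (σ : G.edgeSet → ℝ) (p : ℝ) (Γ : Set (Σ (u : V) (v : V), G.Walk u v)) : ℝ :=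
  sInf (energy G σ p '' {ρ | IsAdmissible G Γ ρ})

/-- The ∞-modulus Mod_∞(Γ) = inf_{ρ ∈ A(Γ)} ℰ_∞(ρ). -/
noncomputable def modulusInf (G : SimpleGraph V) [DecidableRel G.Adj]
    (Γ : Set (Σ (u : V) (v : V), G.Walk u v)) : ℝ :=
  sInf (energyInf G '' {ρ | IsAdmissible G Γ ρ})

/-- The connecting family Γ(s,t): all walks that start at s and end at t. -/
def connectingFamily (G : SimpleGraph V) (s t : V) :
    Set (Σ (u : V) (v : V), G.Walk u v) :=
  {γ | γ.1 = s ∧ γ.2.1 = t}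

/-- The minimum graph length ℓ(Γ) = inf_{γ ∈ Γ} ℓ(γ) (smallest number of hops). -/
noncomputable def minLength (G : SimpleGraph V)
    (Γ : Set (Σ (u : V) (v : V), G.Walk u v)) : ℕ :=
  sInf {n : ℕ | ∃ γ ∈ Γ, γ.2.2.length = n}

/-- |φ(x) - φ(y)|, the potential drop of φ : V → ℝ across an edge, as a function
on unordered pairs. -/
noncomputable def potDrop (φ : V → ℝ) : Sym2 V → ℝ :=
  Sym2.lift ⟨fun x y => |φ x - φ y|, fun x y => abs_sub_comm (φ x) (φ y)⟩

lemma isClosed_isAdmissible (G : SimpleGraph V) [DecidableRel G.Adj]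
    (Γ : Set (Σ (u : V) (v : V), G.Walk u v)) :
    IsClosed {ρ : G.edgeSet → ℝ | IsAdmissible G Γ ρ} := by
  simp only [IsAdmissible, rhoLength, Set.ofPred_and, Set.ofPred_forall]
  refine IsClosed.inter ?_ ?_
  · exact isClosed_iInter fun e => isClosed_le (by fun_prop) (by fun_prop)
  · exact isClosed_iInter fun γ => isClosed_iInter fun _ =>
      isClosed_le (by fun_prop) (by fun_prop)

lemma isAdmissible_one (G : SimpleGraph V) [DecidableRel G.Adj]
    (Γ : Set (Σ (u : V) (v : V), G.Walk u v)) (hΓ : ∀ γ ∈ Γ, 0 < γ.2.2.length) :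
    IsAdmissible G Γ (fun _ => 1) := by
  refine ⟨fun _ => zero_le_one, fun γ hγ => ?_⟩
  have hpos : 0 < γ.2.2.edges.length := by simpa using hΓ γ hγ
  obtain ⟨e, he⟩ := List.exists_mem_of_length_pos hpos
  have heG : e ∈ G.edgeSet := γ.2.2.edges_subset_edgeSet he
  have hcount : (1 : ℝ) ≤ (γ.2.2.edges.count e : ℝ) := by
    exact_mod_cast List.count_pos_iff.2 he
  calc (1 : ℝ) ≤ (γ.2.2.edges.count e : ℝ) * 1 := by simpa using hcount
    _ ≤ rhoLength G (fun _ => 1) γ.2.2 :=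
      Finset.single_le_sum (f := fun e : G.edgeSet => (γ.2.2.edges.count (e : Sym2 V) : ℝ) * 1)
        (fun _ _ => by positivity) (Finset.mem_univ (⟨e, heG⟩ : G.edgeSet))

/-- The direct method: a continuous functional on `ι → ℝ`, each of whose sublevel sets is contained
in a box, attains its infimum on a nonempty closed set. -/
lemma exists_eq_sInf_of_coercive {ι : Type*} {A : Set (ι → ℝ)}
    (hA : IsClosed A) (hne : A.Nonempty) {f : (ι → ℝ) → ℝ} (hf : Continuous f)
    (hb : ∀ c, ∃ R : ι → ℝ, ∀ ρ, f ρ ≤ c → ∀ e, |ρ e| ≤ R e) :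
    ∃ ρ ∈ A, f ρ = sInf (f '' A) := by
  obtain ⟨ρ₀, hρ₀⟩ := hne
  obtain ⟨R, hR⟩ := hb (f ρ₀)
  have hbox : IsCompact (Set.univ.pi fun e => Set.Icc (-R e) (R e)) :=
    isCompact_univ_pi fun _ => isCompact_Icc
  have hK : IsCompact (A ∩ {ρ | f ρ ≤ f ρ₀}) :=
    hbox.of_isClosed_subset (hA.inter (isClosed_le hf continuous_const))
      fun ρ hρ e _ => abs_le.1 (hR ρ hρ.2 e)
  obtain ⟨ρ, hρ, hmin⟩ := hK.exists_isMinOn ⟨ρ₀, hρ₀, le_refl (f ρ₀)⟩ hf.continuousOn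
  have hleast : IsLeast (f '' A) (f ρ) := by
    refine ⟨⟨ρ, hρ.1, rfl⟩, ?_⟩
    rintro _ ⟨τ, hτ, rfl⟩
    rcases le_total (f τ) (f ρ₀) with h | h
    · exact hmin ⟨hτ, h⟩
    · exact hρ.2.trans h
  exact ⟨ρ, hρ.1, hleast.csInf_eq.symm⟩

lemma continuous_energy (G : SimpleGraph V) [DecidableRel G.Adj]
    (σ : G.edgeSet → ℝ) {p : ℝ} (hp : 1 ≤ p) : Continuous (energy G σ p) := by
  refine continuous_finsetSum _ fun e _ => continuous_const.mul ?_
  exact (continuous_apply e).abs.rpow_const fun _ => Or.inr (zero_le_one.trans hp)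

lemma abs_le_of_energy_le (G : SimpleGraph V) [DecidableRel G.Adj]
    {σ : G.edgeSet → ℝ} (hσ : ∀ e, 0 < σ e) {p : ℝ} (hp : 1 ≤ p) {c : ℝ} {ρ : G.edgeSet → ℝ}
    (h : energy G σ p ρ ≤ c) (e : G.edgeSet) : |ρ e| ≤ max 1 (c / σ e) := by
  rcases le_total |ρ e| 1 with h1 | h1
  · exact h1.trans (le_max_left _ _)
  · refine le_trans ?_ (le_max_right _ _)
    rw [le_div_iff₀' (hσ e)]
    calc σ e * |ρ e| ≤ σ e * |ρ e| ^ p :=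
          mul_le_mul_of_nonneg_left (Real.self_le_rpow_of_one_le h1 hp) (hσ e).le
      _ ≤ energy G σ p ρ :=
          Finset.single_le_sum (f := fun e => σ e * |ρ e| ^ p)
            (fun i _ => mul_nonneg (hσ i).le (by positivity)) (Finset.mem_univ e)
      _ ≤ c := h

lemma energyInf_eq_norm (G : SimpleGraph V) [DecidableRel G.Adj] (ρ : G.edgeSet → ℝ) :
    energyInf G ρ = ‖ρ‖ := by
  refine le_antisymm (Real.iSup_le (fun e => norm_le_pi_norm ρ e) (norm_nonneg _)) ?_
  refine (pi_norm_le_iff_of_nonneg (Real.iSup_nonneg fun _ => abs_nonneg _)).2 fun e => ?_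
  exact le_ciSup (f := fun e => |ρ e|) (Set.finite_range _).bddAbove e

/-- For a finite weighted graph, a nonempty family of walks Γ, and
1 ≤ p ≤ ∞, there exists an extremal density ρ* ∈ A(Γ) attaining the p-modulus. -/
theorem modulus_exists_extremal
    (G : SimpleGraph V) [DecidableRel G.Adj]
    (σ : G.edgeSet → ℝ) (hσ : ∀ e, 0 < σ e)
    (Γ : Set (Σ (u : V) (v : V), G.Walk u v))
    (hne : Γ.Nonempty) (hΓ : ∀ γ ∈ Γ, 0 < γ.2.2.length) :
    (∀ p : ℝ, 1 ≤ p → ∃ ρstar : G.edgeSet → ℝ,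
        IsAdmissible G Γ ρstar ∧ energy G σ p ρstar = modulus G σ p Γ) ∧
    (∃ ρstar : G.edgeSet → ℝ,
        IsAdmissible G Γ ρstar ∧ energyInf G ρstar = modulusInf G Γ) := by
  have hA := isClosed_isAdmissible G Γ
  have hA' : {ρ : G.edgeSet → ℝ | IsAdmissible G Γ ρ}.Nonempty := ⟨_, isAdmissible_one G Γ hΓ⟩
  refine ⟨fun p hp => ?_, ?_⟩
  · exact exists_eq_sInf_of_coercive hA hA' (continuous_energy G σ hp)
      fun c => ⟨fun e => max 1 (c / σ e), fun _ h => abs_le_of_energy_le G hσ hp h⟩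
  · have hnorm : energyInf G = norm := funext (energyInf_eq_norm G)
    exact exists_eq_sInf_of_coercive hA hA' (hnorm ▸ continuous_norm)
      fun c => ⟨fun _ => c, fun ρ h e =>
        (norm_le_pi_norm ρ e).trans ((energyInf_eq_norm G ρ).symm.le.trans h)⟩
end

section
/- Let G=(V,E,σ) be a finite weighted graph, let Γ be a nonempty family of walks on G, and let 1 < p < ∞. Then the extremal density is unique: if ρ₁, ρ₂ ∈ A(Γ) satisfy ℰ_p(ρ₁) = ℰ_p(ρ₂) = Mod_p(Γ), then ρ₁ = ρ₂. -/
/-!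
The `p`-energy is strictly convex on the cone of nonnegative densities when `p > 1`, since each
summand `σ e * x ^ p` is, while the admissible set is convex because the `ρ`-length of a walk is
linear in `ρ`. So the midpoint of two distinct extremal densities would be admissible with energy
strictly below the modulus.
-/

open scoped BigOperators

variable {V : Type*} [Fintype V] [DecidableEq V]

/-- The `ρ`-length is affine in `ρ`, stated for midpoints. -/
lemma rhoLength_midpoint (G : SimpleGraph V) [DecidableRel G.Adj]
    (ρ₁ ρ₂ : G.edgeSet → ℝ) {u v : V} (w : G.Walk u v) :
    rhoLength G (fun e => (1 / 2) * ρ₁ e + (1 / 2) * ρ₂ e) w =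
      (1 / 2) * rhoLength G ρ₁ w + (1 / 2) * rhoLength G ρ₂ w := by
  simp only [rhoLength, Finset.mul_sum, ← Finset.sum_add_distrib]
  exact Finset.sum_congr rfl fun e _ => by ring

lemma IsAdmissible.midpoint {G : SimpleGraph V} [DecidableRel G.Adj]
    {Γ : Set (Σ (u : V) (v : V), G.Walk u v)} {ρ₁ ρ₂ : G.edgeSet → ℝ}
    (h₁ : IsAdmissible G Γ ρ₁) (h₂ : IsAdmissible G Γ ρ₂) :
    IsAdmissible G Γ (fun e => (1 / 2) * ρ₁ e + (1 / 2) * ρ₂ e) := by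
  refine ⟨fun e => ?_, fun γ hγ => ?_⟩
  · linarith [h₁.1 e, h₂.1 e]
  · rw [rhoLength_midpoint]
    linarith [h₁.2 γ hγ, h₂.2 γ hγ]

/-- The modulus is a genuine lower bound: the energies are bounded below by `0`, so the infimum
defining it does not take its junk value. -/
lemma modulus_le_energy {G : SimpleGraph V} [DecidableRel G.Adj]
    {σ : G.edgeSet → ℝ} (hσ : ∀ e, 0 < σ e) (p : ℝ)
    {Γ : Set (Σ (u : V) (v : V), G.Walk u v)} {ρ : G.edgeSet → ℝ}
    (h : IsAdmissible G Γ ρ) : modulus G σ p Γ ≤ energy G σ p ρ := by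
  refine csInf_le ⟨0, ?_⟩ ⟨ρ, h, rfl⟩
  rintro _ ⟨ρ', -, rfl⟩
  exact Finset.sum_nonneg fun e _ => mul_nonneg (hσ e).le (Real.rpow_nonneg (abs_nonneg _) _)

/-- Strict convexity of the energy on nonnegative densities, at midpoints. -/
lemma energy_midpoint_lt {G : SimpleGraph V} [DecidableRel G.Adj]
    {σ : G.edgeSet → ℝ} (hσ : ∀ e, 0 < σ e) {p : ℝ} (hp : 1 < p) {ρ₁ ρ₂ : G.edgeSet → ℝ}
    (h₁ : ∀ e, 0 ≤ ρ₁ e) (h₂ : ∀ e, 0 ≤ ρ₂ e) (hne : ρ₁ ≠ ρ₂) :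
    energy G σ p (fun e => (1 / 2) * ρ₁ e + (1 / 2) * ρ₂ e) <
      (1 / 2) * energy G σ p ρ₁ + (1 / 2) * energy G σ p ρ₂ := by
  have hconv := strictConvexOn_rpow hp
  have hmid : ∀ e, |(1 / 2) * ρ₁ e + (1 / 2) * ρ₂ e| = (1 / 2) * ρ₁ e + (1 / 2) * ρ₂ e :=
    fun e => abs_of_nonneg (by linarith [h₁ e, h₂ e])
  simp only [energy, hmid, abs_of_nonneg (h₁ _), abs_of_nonneg (h₂ _), Finset.mul_sum,
    ← Finset.sum_add_distrib]
  obtain ⟨e₀, he₀⟩ := Function.ne_iff.mp hne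
  refine Finset.sum_lt_sum (fun e _ => ?_) ⟨e₀, Finset.mem_univ _, ?_⟩
  · have h := hconv.convexOn.2 (h₁ e) (h₂ e)
      (one_half_pos (α := ℝ)).le (one_half_pos (α := ℝ)).le (add_halves 1)
    simp only [smul_eq_mul] at h
    linarith [mul_le_mul_of_nonneg_left h (hσ e).le]
  · have h := hconv.2 (h₁ e₀) (h₂ e₀) he₀
      (one_half_pos (α := ℝ)) (one_half_pos (α := ℝ)) (add_halves 1)
    simp only [smul_eq_mul] at h
    linarith [mul_lt_mul_of_pos_left h (hσ e₀)]

/-- For 1 < p < ∞ the extremal density is unique. -/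
theorem modulus_extremal_unique
    (G : SimpleGraph V) [DecidableRel G.Adj]
    (σ : G.edgeSet → ℝ) (hσ : ∀ e, 0 < σ e)
    (Γ : Set (Σ (u : V) (v : V), G.Walk u v))
    (hne : Γ.Nonempty) (hΓ : ∀ γ ∈ Γ, 0 < γ.2.2.length)
    (p : ℝ) (hp : 1 < p)
    (ρ₁ ρ₂ : G.edgeSet → ℝ)
    (h₁ : IsAdmissible G Γ ρ₁) (h₂ : IsAdmissible G Γ ρ₂)
    (he₁ : energy G σ p ρ₁ = modulus G σ p Γ)
    (he₂ : energy G σ p ρ₂ = modulus G σ p Γ) :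
    ρ₁ = ρ₂ := by
  by_contra hρ
  have hlt := energy_midpoint_lt hσ hp h₁.1 h₂.1 hρ
  have hle := modulus_le_energy hσ p (h₁.midpoint h₂)
  linarith
end

section
/- Let G=(V,E,σ) be a finite weighted graph, let Γ be a nonempty family of walks on G, and let p = ∞. Then there exists a density ρ* with 0 ≤ ρ* ≤ 1, ℓ_{ρ*}(Γ) ≥ 1, and ℰ_∞(ρ*) = Mod_∞(Γ); i.e. the ∞-modulus problem has at least one extremal density lying in the restricted admissible set A*(Γ). -/
/-!
A density bounded by `M` gives a walk with `n` edges length at most `M * n`, with equality for the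
constant density `M`. Hence, if `n ≥ 1` is the least number of edges of a walk in `Γ`, the constant
density `1 / n` is admissible, and testing an admissible density `ρ` against a shortest walk of `Γ`
gives `1 ≤ ℰ_∞(ρ) * n`. So `1 / n` is the modulus and the constant density attains it; it is at
most `1` because every walk of `Γ` traverses an edge.
-/

open scoped BigOperators

variable {V : Type*} [Fintype V] [DecidableEq V]

/-- Summing the traversal counts over all edges gives the length of the walk. -/
lemma sum_count_edges (G : SimpleGraph V) [DecidableRel G.Adj] {u v : V} (w : G.Walk u v) :
    ∑ e : G.edgeSet, (w.edges.count ↑e : ℝ) = w.length := by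
  have h1 : ∑ e : G.edgeSet, w.edges.count (e : Sym2 V) = ∑ e ∈ G.edgeFinset, w.edges.count e :=
    (Finset.sum_subtype G.edgeFinset (fun _ => SimpleGraph.mem_edgeFinset)
      (fun e => w.edges.count e)).symm
  have h2 : ∑ e ∈ G.edgeFinset, w.edges.count e = w.edges.length := by
    rw [← Multiset.coe_card, ← Multiset.sum_count_eq_card (s := G.edgeFinset)]
    · simp
    · intro e he
      exact SimpleGraph.mem_edgeFinset.2 (w.edges_subset_edgeSet he)
  rw [← w.length_edges, ← h2, ← h1, Nat.cast_sum]

lemma rhoLength_const (G : SimpleGraph V) [DecidableRel G.Adj] (c : ℝ) {u v : V}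
    (w : G.Walk u v) : rhoLength G (fun _ => c) w = w.length * c := by
  rw [rhoLength, ← Finset.sum_mul, sum_count_edges]

lemma rhoLength_le (G : SimpleGraph V) [DecidableRel G.Adj] (ρ : G.edgeSet → ℝ) {u v : V}
    (w : G.Walk u v) : rhoLength G ρ w ≤ w.length * energyInf G ρ := by
  rw [← sum_count_edges, Finset.sum_mul]
  refine Finset.sum_le_sum fun e _ => mul_le_mul_of_nonneg_left ?_ (Nat.cast_nonneg _)
  exact (le_abs_self _).trans (le_ciSup (f := fun e => |ρ e|) (Set.finite_range _).bddAbove e)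

/-- The ∞-modulus problem has at least one extremal density lying in the
restricted admissible set A*(Γ) (i.e. with 0 ≤ ρ* ≤ 1). -/
theorem modulusInf_exists_restricted_extremal
    (G : SimpleGraph V) [DecidableRel G.Adj]
    (σ : G.edgeSet → ℝ) (hσ : ∀ e, 0 < σ e)
    (Γ : Set (Σ (u : V) (v : V), G.Walk u v))
    (hne : Γ.Nonempty) (hΓ : ∀ γ ∈ Γ, 0 < γ.2.2.length) :
    ∃ ρstar : G.edgeSet → ℝ,
      (∀ e, 0 ≤ ρstar e ∧ ρstar e ≤ 1) ∧
      (∀ γ ∈ Γ, 1 ≤ rhoLength G ρstar γ.2.2) ∧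
      energyInf G ρstar = modulusInf G Γ := by
  obtain ⟨γ, hγ, hmin⟩ := exists_minimalFor_of_wellFoundedLT
    (fun γ => γ ∈ Γ) (fun γ : Σ (u : V) (v : V), G.Walk u v => γ.2.2.length) hne
  have hle : ∀ γ' ∈ Γ, γ.2.2.length ≤ γ'.2.2.length := fun γ' h' =>
    (le_total _ _).elim id fun h => hmin h' h
  have hpos := hΓ γ hγ
  have hn : (0 : ℝ) < γ.2.2.length := by exact_mod_cast hpos
  have hn1 : (1 : ℝ) ≤ γ.2.2.length := by exact_mod_cast hpos
  have hadm : ∀ γ' ∈ Γ, 1 ≤ rhoLength G (fun _ => 1 / (γ.2.2.length : ℝ)) γ'.2.2 := by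
    intro γ' h'
    rw [rhoLength_const, mul_one_div, one_le_div hn]
    exact_mod_cast hle γ' h'
  -- The supremum defining the energy is over a nonempty set: a walk of positive length has an edge.
  have : Nonempty G.edgeSet := by
    obtain ⟨e, he⟩ := List.exists_mem_of_length_pos (γ.2.2.length_edges.symm ▸ hpos)
    exact ⟨e, γ.2.2.edges_subset_edgeSet he⟩
  have hE : energyInf G (fun _ => 1 / (γ.2.2.length : ℝ)) = 1 / γ.2.2.length := by
    rw [energyInf, ciSup_const, abs_of_pos (one_div_pos.2 hn)]
  refine ⟨fun _ => 1 / γ.2.2.length, fun _ => ⟨(one_div_pos.2 hn).le, ?_⟩, hadm, ?_⟩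
  · rwa [div_le_one hn]
  · symm
    refine IsLeast.csInf_eq ⟨⟨_, ⟨fun _ => (one_div_pos.2 hn).le, hadm⟩, rfl⟩, ?_⟩
    rintro _ ⟨ρ, hρ, rfl⟩
    rw [hE, div_le_iff₀' hn]
    exact (hρ.2 γ hγ).trans (rhoLength_le G ρ γ.2.2)
end

section
/- Let Γ be any family of walks on a finite graph G. Then there exists a finite subfamily Γ* ⊆ Γ such that A(Γ*) = A(Γ), i.e. a density ρ:E→ℝ with ρ ≥ 0 satisfies ℓ_ρ(γ) ≥ 1 for all γ ∈ Γ if and only if it satisfies ℓ_ρ(γ) ≥ 1 for all γ ∈ Γ*. -/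
/-!
Encode a walk by its vector of edge multiplicities `N(γ, ·) ∈ ℕ^E`. By Dickson's lemma `ℕ^E` with
the pointwise order is well-quasi-ordered, so the set of multiplicity vectors of walks in `Γ` has
only finitely many minimal elements, and every vector in it lies above a minimal one. Choosing one
walk for each minimal vector gives `Γ*`. For `ρ ≥ 0` the `ρ`-length is monotone in the multiplicity
vector, so every walk of `Γ` is at least as long as some walk of `Γ*`.
-/

open scoped BigOperators

variable {V : Type*} [Fintype V] [DecidableEq V]

/-- The multiplicity vector `N(γ, ·)` of a walk, indexed by the edges of `G`. -/
def edgeMult (G : SimpleGraph V) (γ : Σ (u : V) (v : V), G.Walk u v) : G.edgeSet → ℕ :=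
  fun e => γ.2.2.edges.count ↑e

lemma rhoLength_mono (G : SimpleGraph V) [DecidableRel G.Adj] {ρ : G.edgeSet → ℝ}
    (hρ : ∀ e, 0 ≤ ρ e) {γ δ : Σ (u : V) (v : V), G.Walk u v}
    (h : edgeMult G γ ≤ edgeMult G δ) : rhoLength G ρ γ.2.2 ≤ rhoLength G ρ δ.2.2 :=
  Finset.sum_le_sum fun e _ => mul_le_mul_of_nonneg_right (Nat.cast_le.mpr (h e)) (hρ e)

/-- In a well-quasi-order every set is dominated from below by a finite subset: take its minimal
elements, which form an antichain. -/
lemma exists_finite_subset_forall_ge {α : Type*} [PartialOrder α] [WellQuasiOrderedLE α]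
    (s : Set α) : ∃ t ⊆ s, t.Finite ∧ ∀ a ∈ s, ∃ b ∈ t, b ≤ a := by
  refine ⟨{b | Minimal (· ∈ s) b}, fun b hb => hb.prop,
    WellQuasiOrderedLE.finite_of_isAntichain (setOfPred_minimal_antichain _), fun a ha => ?_⟩
  obtain ⟨b, hba, hb⟩ := exists_minimal_le_of_wellFoundedLT (· ∈ s) a ha
  exact ⟨b, hb, hba⟩

/-- Every family of walks Γ admits a finite essential subfamily
Γ* ⊆ Γ with A(Γ*) = A(Γ). -/
theorem exists_essential_subfamily
    (G : SimpleGraph V) [DecidableRel G.Adj]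
    (Γ : Set (Σ (u : V) (v : V), G.Walk u v))
    (hΓ : ∀ γ ∈ Γ, 0 < γ.2.2.length) :
    ∃ Γstar ⊆ Γ, Γstar.Finite ∧
      ∀ ρ : G.edgeSet → ℝ, (∀ e, 0 ≤ ρ e) →
        ((∀ γ ∈ Γ, 1 ≤ rhoLength G ρ γ.2.2) ↔
          (∀ γ ∈ Γstar, 1 ≤ rhoLength G ρ γ.2.2)) := by
  obtain ⟨t, ht, hfin, hdom⟩ := Set.exists_subset_image_finite_and.mp
    (exists_finite_subset_forall_ge (edgeMult G '' Γ))
  refine ⟨t, ht, hfin, fun ρ hρ => ⟨fun h γ hγ => h γ (ht hγ), fun h γ hγ => ?_⟩⟩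
  obtain ⟨_, ⟨δ, hδ, rfl⟩, hle⟩ := hdom _ (Set.mem_image_of_mem _ hγ)
  exact (h δ hδ).trans (rhoLength_mono G hρ hle)
end

section
/- Let G=(V,E,σ) be a finite undirected weighted graph and let s,t ∈ V be distinct. Then Mod_2(Γ(s,t)) equals the effective conductance C_eff(s,t), i.e. Mod_2(Γ(s,t)) = min { Σ_{(x,y)∈E} σ(x,y)(φ(x) − φ(y))² : φ:V→ℝ, φ(s)=0, φ(t)=1 }. -/
/-!
Densities and potentials exchange as follows. A potential `φ` with `φ s = 0` and `φ t = 1` makes its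
potential drop an admissible density of the same energy: the drops along a walk sum to at least
`|φ s - φ t| = 1` (`abs_sub_le_rhoLength_potDrop`). Conversely, an admissible `ρ` yields the
potential `cappedDist`, the `ρ`-distance from `s` truncated at `1`; it vanishes at `s`, equals `1`
at `t` by admissibility, and its drop across each edge is at most `ρ` (`potDrop_cappedDist_le`),
so its energy is at most that of `ρ`. Since these potentials take values in `[0, 1]`, compactness of
the cube provides a potential of least energy, and its drop is then an extremal density.
-/


open scoped BigOperators

variable {V : Type*} [Fintype V] [DecidableEq V]

lemma rhoLength_cons (G : SimpleGraph V) [DecidableRel G.Adj] (ρ : G.edgeSet → ℝ)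
    {u v x : V} (h : G.Adj u v) (w : G.Walk v x) :
    rhoLength G ρ (SimpleGraph.Walk.cons h w) = ρ ⟨s(u, v), h⟩ + rhoLength G ρ w := by
  have key : ∀ e : G.edgeSet, ((s(u, v) :: w.edges).count ↑e : ℝ) * ρ e
      = (if (⟨s(u, v), h⟩ : G.edgeSet) = e then ρ e else 0) + (w.edges.count ↑e : ℝ) * ρ e := by
    intro e
    by_cases he : (⟨s(u, v), h⟩ : G.edgeSet) = e
    · subst he
      simp
      ring
    · have he' : s(u, v) ≠ (e : Sym2 V) := fun h' => he (Subtype.ext h')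
      simp [he, List.count_cons_of_ne he']
  simp only [rhoLength, SimpleGraph.Walk.edges_cons, key, Finset.sum_add_distrib]
  simp

lemma rhoLength_nil (G : SimpleGraph V) [DecidableRel G.Adj] (ρ : G.edgeSet → ℝ) (u : V) :
    rhoLength G ρ (SimpleGraph.Walk.nil : G.Walk u u) = 0 := by
  simp [rhoLength]

lemma rhoLength_concat (G : SimpleGraph V) [DecidableRel G.Adj] (ρ : G.edgeSet → ℝ)
    {u v x : V} (w : G.Walk u v) (h : G.Adj v x) :
    rhoLength G ρ (w.concat h) = rhoLength G ρ w + ρ ⟨s(v, x), h⟩ := by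
  induction w with
  | nil => rw [SimpleGraph.Walk.concat_nil, rhoLength_cons, rhoLength_nil, rhoLength_nil, add_comm]
  | cons h' w ih => rw [SimpleGraph.Walk.concat_cons, rhoLength_cons, rhoLength_cons, ih, add_assoc]

lemma rhoLength_nonneg (G : SimpleGraph V) [DecidableRel G.Adj] {ρ : G.edgeSet → ℝ}
    (hρ : ∀ e, 0 ≤ ρ e) {u v : V} (w : G.Walk u v) : 0 ≤ rhoLength G ρ w :=
  Finset.sum_nonneg fun e _ => mul_nonneg (Nat.cast_nonneg _) (hρ e)

lemma potDrop_nonneg (φ : V → ℝ) (e : Sym2 V) : 0 ≤ potDrop φ e := by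
  induction e with | _ x y => exact abs_nonneg (φ x - φ y)

lemma abs_sub_le_rhoLength_potDrop (G : SimpleGraph V) [DecidableRel G.Adj] (φ : V → ℝ)
    {u v : V} (w : G.Walk u v) :
    |φ u - φ v| ≤ rhoLength G (fun e => potDrop φ ↑e) w := by
  induction w with
  | nil => simp [rhoLength_nil]
  | @cons a b c h w ih =>
    rw [rhoLength_cons]
    exact (abs_sub_le (φ a) (φ b) (φ c)).trans (add_le_add_right ih _)

/-- The `ρ`-distance from `s` to `x`, truncated at `1`. Including the value `1` among the lengths
makes the infimum meaningful, and equal to `1`, when no walk joins `s` to `x`. -/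
noncomputable def cappedDist (G : SimpleGraph V) [DecidableRel G.Adj]
    (ρ : G.edgeSet → ℝ) (s x : V) : ℝ :=
  sInf (insert 1 (Set.range fun w : G.Walk s x => rhoLength G ρ w))

lemma zero_mem_lowerBounds (G : SimpleGraph V) [DecidableRel G.Adj] {ρ : G.edgeSet → ℝ}
    (hρ : ∀ e, 0 ≤ ρ e) (s x : V) :
    0 ∈ lowerBounds (insert 1 (Set.range fun w : G.Walk s x => rhoLength G ρ w)) := by
  rintro a (rfl | ⟨w, rfl⟩)
  · exact zero_le_one
  · exact rhoLength_nonneg G hρ w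

lemma cappedDist_mem_Icc (G : SimpleGraph V) [DecidableRel G.Adj] {ρ : G.edgeSet → ℝ}
    (hρ : ∀ e, 0 ≤ ρ e) (s x : V) : cappedDist G ρ s x ∈ Set.Icc (0 : ℝ) 1 :=
  ⟨le_csInf (Set.insert_nonempty _ _) (zero_mem_lowerBounds G hρ s x),
    csInf_le ⟨0, zero_mem_lowerBounds G hρ s x⟩ (Set.mem_insert _ _)⟩

lemma cappedDist_le_rhoLength (G : SimpleGraph V) [DecidableRel G.Adj] {ρ : G.edgeSet → ℝ}
    (hρ : ∀ e, 0 ≤ ρ e) {s x : V} (w : G.Walk s x) : cappedDist G ρ s x ≤ rhoLength G ρ w :=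
  csInf_le ⟨0, zero_mem_lowerBounds G hρ s x⟩ (Set.mem_insert_of_mem _ ⟨w, rfl⟩)

lemma cappedDist_self (G : SimpleGraph V) [DecidableRel G.Adj] {ρ : G.edgeSet → ℝ}
    (hρ : ∀ e, 0 ≤ ρ e) (s : V) : cappedDist G ρ s s = 0 :=
  le_antisymm ((cappedDist_le_rhoLength G hρ SimpleGraph.Walk.nil).trans_eq (rhoLength_nil G ρ s))
    (cappedDist_mem_Icc G hρ s s).1

lemma cappedDist_eq_one (G : SimpleGraph V) [DecidableRel G.Adj] {ρ : G.edgeSet → ℝ} {s t : V}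
    (h : IsAdmissible G (connectingFamily G s t) ρ) : cappedDist G ρ s t = 1 := by
  refine le_antisymm (cappedDist_mem_Icc G h.1 s t).2 (le_csInf (Set.insert_nonempty _ _) ?_)
  rintro a (rfl | ⟨w, rfl⟩)
  · exact le_rfl
  · exact h.2 ⟨s, t, w⟩ ⟨rfl, rfl⟩

lemma cappedDist_le_add (G : SimpleGraph V) [DecidableRel G.Adj] {ρ : G.edgeSet → ℝ}
    (hρ : ∀ e, 0 ≤ ρ e) (s : V) {x y : V} (h : G.Adj x y) :
    cappedDist G ρ s y ≤ cappedDist G ρ s x + ρ ⟨s(x, y), h⟩ := by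
  rw [← sub_le_iff_le_add]
  refine le_csInf (Set.insert_nonempty _ _) ?_
  rintro a (rfl | ⟨w, rfl⟩)
  · have := (cappedDist_mem_Icc G hρ s y).2
    have := hρ ⟨s(x, y), h⟩
    linarith
  · rw [sub_le_iff_le_add, ← rhoLength_concat]
    exact cappedDist_le_rhoLength G hρ _

lemma potDrop_cappedDist_le (G : SimpleGraph V) [DecidableRel G.Adj] {ρ : G.edgeSet → ℝ}
    (hρ : ∀ e, 0 ≤ ρ e) (s : V) (e : G.edgeSet) : potDrop (cappedDist G ρ s) ↑e ≤ ρ e := by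
  obtain ⟨e, he⟩ := e
  induction e with
  | _ x y =>
    have h : G.Adj x y := he
    have h1 := cappedDist_le_add G hρ s h
    have h2 := cappedDist_le_add G hρ s h.symm
    have h3 : (⟨s(y, x), h.symm⟩ : G.edgeSet) = ⟨s(x, y), he⟩ := Subtype.ext Sym2.eq_swap
    rw [h3] at h2
    exact abs_sub_le_iff.2 ⟨by linarith, by linarith⟩

lemma energy_two (G : SimpleGraph V) [DecidableRel G.Adj] (σ ρ : G.edgeSet → ℝ) :
    energy G σ 2 ρ = ∑ e : G.edgeSet, σ e * ρ e ^ 2 := by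
  simp [energy]

lemma isAdmissible_potDrop (G : SimpleGraph V) [DecidableRel G.Adj] {φ : V → ℝ} {s t : V}
    (h0 : φ s = 0) (h1 : φ t = 1) :
    IsAdmissible G (connectingFamily G s t) (fun e => potDrop φ ↑e) := by
  refine ⟨fun e => potDrop_nonneg φ e, ?_⟩
  rintro ⟨u, v, w⟩ ⟨rfl, rfl⟩
  simpa [h0, h1] using abs_sub_le_rhoLength_potDrop G φ w

/-- The energy is minimised among potentials with values in `[0, 1]` by compactness; the truncated
distances show that this minimiser beats every admissible density. -/
lemma exists_potential_le_energy (G : SimpleGraph V) [DecidableRel G.Adj]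
    {σ : G.edgeSet → ℝ} (hσ : ∀ e, 0 < σ e) {s t : V} (hst : s ≠ t) :
    ∃ φ : V → ℝ, φ s = 0 ∧ φ t = 1 ∧ ∀ ρ, IsAdmissible G (connectingFamily G s t) ρ →
      ∑ e : G.edgeSet, σ e * (potDrop φ ↑e) ^ 2 ≤ energy G σ 2 ρ := by
  let K : Set (V → ℝ) :=
    (Set.univ.pi fun _ => Set.Icc (0 : ℝ) 1) ∩ ({φ | φ s = 0} ∩ {φ | φ t = 1})
  have hK : IsCompact K := (isCompact_univ_pi fun _ => isCompact_Icc).inter_right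
    ((isClosed_eq (continuous_apply s) continuous_const).inter
      (isClosed_eq (continuous_apply t) continuous_const))
  have hne : K.Nonempty := by
    refine ⟨Pi.single t 1, fun x _ => ?_, by simp [hst], by simp⟩
    by_cases hx : x = t
    · subst hx; simp
    · simp [hx]
  have hcont : Continuous fun φ : V → ℝ => ∑ e : G.edgeSet, σ e * (potDrop φ ↑e) ^ 2 := by
    refine continuous_finsetSum _ fun e _ => continuous_const.mul (Continuous.pow ?_ 2)
    induction (e : Sym2 V) with
    | _ x y => exact ((continuous_apply x).sub (continuous_apply y)).abs
  obtain ⟨φ, hφ, hmin⟩ := hK.exists_isMinOn hne hcont.continuousOn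
  refine ⟨φ, hφ.2.1, hφ.2.2, fun ρ hρ => ?_⟩
  have hmem : cappedDist G ρ s ∈ K :=
    ⟨fun x _ => cappedDist_mem_Icc G hρ.1 s x, cappedDist_self G hρ.1 s, cappedDist_eq_one G hρ⟩
  refine (hmin hmem).trans ?_
  rw [energy_two]
  exact Finset.sum_le_sum fun e _ => mul_le_mul_of_nonneg_left
    (pow_le_pow_left₀ (potDrop_nonneg _ _) (potDrop_cappedDist_le G hρ.1 s e) 2) (hσ e).le

/-- Mod_2(Γ(s,t)) equals the effective conductance, i.e. it is the minimum
of Σ_{(x,y)∈E} σ(x,y)(φ(x)-φ(y))² over potentials φ with φ(s)=0 and φ(t)=1. -/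
theorem modulus_two_eq_effectiveConductance
    (G : SimpleGraph V) [DecidableRel G.Adj]
    (σ : G.edgeSet → ℝ) (hσ : ∀ e, 0 < σ e)
    (s t : V) (hst : s ≠ t) :
    IsLeast {x : ℝ | ∃ φ : V → ℝ, φ s = 0 ∧ φ t = 1 ∧
        x = ∑ e : G.edgeSet, σ e * (potDrop φ ↑e) ^ 2}
      (modulus G σ 2 (connectingFamily G s t)) := by
  obtain ⟨φ, h0, h1, hφ⟩ := exists_potential_le_energy G hσ hst
  have hleast : IsLeast (energy G σ 2 '' {ρ | IsAdmissible G (connectingFamily G s t) ρ})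
      (∑ e : G.edgeSet, σ e * (potDrop φ ↑e) ^ 2) := by
    refine ⟨⟨_, isAdmissible_potDrop G h0 h1, energy_two G σ _⟩, ?_⟩
    rintro _ ⟨ρ, hρ, rfl⟩
    exact hφ ρ hρ
  have hmod : modulus G σ 2 (connectingFamily G s t)
      = ∑ e : G.edgeSet, σ e * (potDrop φ ↑e) ^ 2 := hleast.csInf_eq
  rw [hmod]
  refine ⟨⟨φ, h0, h1, rfl⟩, ?_⟩
  rintro _ ⟨ψ, hψ0, hψ1, rfl⟩
  exact (hφ _ (isAdmissible_potDrop G hψ0 hψ1)).trans_eq (energy_two G σ _)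
end

section
/- Let G=(V,E,σ) be a finite undirected weighted graph, let s,t ∈ V be distinct, and let Γ be the (finite) family of simple paths from s to t. Then Mod_1(Γ(s,t)) equals the maximal flow value: Mod_1(Γ(s,t)) = max { Σ_{γ∈Γ} λ(γ) : λ:Γ→[0,∞) with Σ_{γ∈Γ} N(γ,e)λ(γ) ≤ σ(e) for every e ∈ E }. -/
/-!
The statement is linear programming duality between the path packing problem (flows) and the
fractional edge covering problem (admissible densities).

Weak duality (`flow_value_le_energy`) is the double count
`∑ λ(γ) ≤ ∑ λ(γ) ℓ_ρ(γ) = ∑ ρ(e) ∑ N(γ,e) λ(γ) ≤ ∑ σ(e) ρ(e)`.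

For strong duality (`exists_flow_exists_density`), a flow of maximal value `M` exists by compactness:
`s ≠ t`, so every path uses an edge, whose capacity bounds the flow along that path. In the space of
pairs (edge loads, value), the open convex set of pairs with loads `< σ` and value `> M` misses the
convex cone of pairs `(∑ N(γ,·) λ(γ), ∑ λ(γ))` with `λ ≥ 0`. A separating functional has the form
`(c, x) ↦ ∑ a(e) c(e) - b x` with `a ≥ 0` and `b > 0`, and `ρ = a / b` is a density
of energy at most `M` giving every path length at least one.

Finally, such a density is admissible for the family of all walks, since removing the cycles of a walk
does not increase its length (`rhoLength_bypass_le`).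
-/


open scoped BigOperators

variable {V : Type*} [Fintype V] [DecidableEq V]

section PackingCovering

variable {E P : Type*} [Fintype E] [Fintype P]

lemma flow_value_le_energy (N : P → E → ℝ) (σ : E → ℝ) (lam : P → ℝ) (ρ : E → ℝ)
    (hlam : ∀ p, 0 ≤ lam p) (hcap : ∀ e, ∑ p, N p e * lam p ≤ σ e)
    (hρ : ∀ e, 0 ≤ ρ e) (hadm : ∀ p, 1 ≤ ∑ e, N p e * ρ e) :
    ∑ p, lam p ≤ ∑ e, σ e * ρ e := by
  calc ∑ p, lam p ≤ ∑ p, lam p * ∑ e, N p e * ρ e :=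
        Finset.sum_le_sum fun p _ => le_mul_of_one_le_right (hlam p) (hadm p)
    _ = ∑ e, (∑ p, N p e * lam p) * ρ e := by
        simp_rw [Finset.mul_sum, Finset.sum_mul]
        rw [Finset.sum_comm]
        exact Finset.sum_congr rfl fun e _ => Finset.sum_congr rfl fun p _ => by ring
    _ ≤ ∑ e, σ e * ρ e :=
        Finset.sum_le_sum fun e _ => mul_le_mul_of_nonneg_right (hcap e) (hρ e)

/-- If every path uses some edge at least once, the flows form a compact set, so one of them has
maximal value. -/
lemma exists_max_flow (N : P → E → ℝ) (hN : ∀ p e, 0 ≤ N p e) (hN1 : ∀ p, ∃ e, 1 ≤ N p e)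
    (σ : E → ℝ) (hσ : ∀ e, 0 < σ e) :
    ∃ lam : P → ℝ, ((∀ p, 0 ≤ lam p) ∧ ∀ e, ∑ p, N p e * lam p ≤ σ e) ∧
      ∀ μ : P → ℝ, (∀ p, 0 ≤ μ p) → (∀ e, ∑ p, N p e * μ p ≤ σ e) →
        ∑ p, μ p ≤ ∑ p, lam p := by
  set K : Set (P → ℝ) := {lam | (∀ p, 0 ≤ lam p) ∧ ∀ e, ∑ p, N p e * lam p ≤ σ e} with hK
  have hclosed : IsClosed K := by
    simp only [hK, Set.ofPred_and, Set.ofPred_forall]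
    refine IsClosed.inter (isClosed_iInter fun p => ?_) (isClosed_iInter fun e => ?_)
    · exact isClosed_le (by fun_prop) (by fun_prop)
    · exact isClosed_le (by fun_prop) (by fun_prop)
  have hsub : K ⊆ Set.Icc (0 : P → ℝ) (fun _ => ∑ e, σ e) := by
    rintro lam ⟨h0, h1⟩
    refine ⟨h0, fun p => ?_⟩
    obtain ⟨e, he⟩ := hN1 p
    calc lam p ≤ N p e * lam p := le_mul_of_one_le_left (h0 p) he
      _ ≤ ∑ q, N q e * lam q :=
          Finset.single_le_sum (f := fun q => N q e * lam q)
            (fun q _ => mul_nonneg (hN q e) (h0 q)) (Finset.mem_univ p)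
      _ ≤ σ e := h1 e
      _ ≤ ∑ e, σ e := Finset.single_le_sum (fun e _ => (hσ e).le) (Finset.mem_univ e)
  have hcomp : IsCompact K := isCompact_Icc.of_isClosed_subset hclosed hsub
  have hne : K.Nonempty := ⟨0, fun p => le_rfl, fun e => by simpa using (hσ e).le⟩
  obtain ⟨lam, hmem, hmax⟩ := hcomp.exists_isMaxOn hne
    (f := fun lam : P → ℝ => ∑ p, lam p) (by fun_prop)
  exact ⟨lam, hmem, fun μ h0 h1 => hmax ⟨h0, h1⟩⟩

/-- Strong duality: some density has energy at most the value of some flow. -/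
lemma exists_flow_exists_density (N : P → E → ℝ) (hN : ∀ p e, 0 ≤ N p e)
    (hN1 : ∀ p, ∃ e, 1 ≤ N p e) (σ : E → ℝ) (hσ : ∀ e, 0 < σ e) :
    ∃ lam : P → ℝ, ((∀ p, 0 ≤ lam p) ∧ ∀ e, ∑ p, N p e * lam p ≤ σ e) ∧
      ∃ ρ : E → ℝ, (∀ e, 0 ≤ ρ e) ∧ (∀ p, 1 ≤ ∑ e, N p e * ρ e) ∧
        ∑ e, σ e * ρ e ≤ ∑ p, lam p := by
  classical
  obtain ⟨lam, hmem, hmax⟩ := exists_max_flow N hN hN1 σ hσ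
  refine ⟨lam, hmem, ?_⟩
  set M : ℝ := ∑ p, lam p with hM
  let S : Set ((E → ℝ) × ℝ) := {z | (∀ e, z.1 e < σ e) ∧ M < z.2}
  let T : Set ((E → ℝ) × ℝ) :=
    {z | ∃ μ : P → ℝ, (∀ p, 0 ≤ μ p) ∧ z = (fun e => ∑ p, N p e * μ p, ∑ p, μ p)}
  have hSopen : IsOpen S := by
    simp only [S, Set.ofPred_and, Set.ofPred_forall]
    refine IsOpen.inter (isOpen_iInter_of_finite fun e => ?_) ?_
    · exact isOpen_lt (by fun_prop) (by fun_prop)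
    · exact isOpen_lt (by fun_prop) (by fun_prop)
  have hSconv : Convex ℝ S := by
    have hS : S = (Set.univ.pi fun e => Set.Iio (σ e)) ×ˢ Set.Ioi M := by
      ext z; simp [S, Set.mem_prod]
    rw [hS]
    exact (convex_pi fun e _ => convex_Iio (σ e)).prod (convex_Ioi M)
  have hTconv : Convex ℝ T := by
    rintro _ ⟨μ, hμ, rfl⟩ _ ⟨ν, hν, rfl⟩ x y hx hy -
    refine ⟨fun p => x * μ p + y * ν p,
      fun p => add_nonneg (mul_nonneg hx (hμ p)) (mul_nonneg hy (hν p)), ?_⟩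
    ext e
    · simp only [Prod.smul_mk, Prod.mk_add_mk, Pi.add_apply, Pi.smul_apply, smul_eq_mul,
        Finset.mul_sum, ← Finset.sum_add_distrib]
      exact Finset.sum_congr rfl fun p _ => by ring
    · simp only [Prod.smul_mk, Prod.mk_add_mk, smul_eq_mul,
        Finset.mul_sum, ← Finset.sum_add_distrib]
  have hdisj : Disjoint S T := by
    rw [Set.disjoint_left]
    rintro _ ⟨h1, h2⟩ ⟨μ, hμ, rfl⟩
    exact absurd (hmax μ hμ fun e => (h1 e).le) (not_le.2 h2)
  obtain ⟨f, u, hfS, hfT⟩ := geometric_hahn_banach_open hSconv hSopen hTconv hdisj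
  set a : E → ℝ := fun e => f (Pi.single e 1, 0) with ha
  set b : ℝ := -f (0, 1) with hb
  have hf : ∀ c x, f (c, x) = ∑ e, c e * a e - b * x := by
    intro c x
    have h1 : f (c, 0) = ∑ e, c e * a e := by
      have h := LinearMap.pi_apply_eq_sum_univ
        ((f : ((E → ℝ) × ℝ) →ₗ[ℝ] ℝ) ∘ₗ LinearMap.inl ℝ (E → ℝ) ℝ) c
      simp only [LinearMap.coe_comp, Function.comp_apply, LinearMap.inl_apply,
        ContinuousLinearMap.coe_coe, smul_eq_mul] at h
      rw [h]
      refine Finset.sum_congr rfl fun e _ => ?_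
      simp only [ha]
      congr 3
      ext i
      simp [Pi.single_apply, eq_comm]
    have h2 : f (0, x) = -(b * x) := by
      have h : ((0, x) : (E → ℝ) × ℝ) = x • (0, 1) := by simp
      rw [h, map_smul, hb, smul_eq_mul]; ring
    have h3 : ((c, x) : (E → ℝ) × ℝ) = (c, 0) + (0, x) := by simp
    rw [h3, map_add, h1, h2]; ring
  have hS' : ∀ (c : E → ℝ) (x : ℝ), (∀ e, c e < σ e) → M < x → ∑ e, c e * a e - b * x < u :=
    fun c x hc hx => hf c x ▸ hfS (c, x) ⟨hc, hx⟩
  have hT' : ∀ μ : P → ℝ, (∀ p, 0 ≤ μ p) →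
      u ≤ ∑ e, (∑ p, N p e * μ p) * a e - b * ∑ p, μ p :=
    fun μ hμ => hf _ _ ▸ hfT _ ⟨μ, hμ, rfl⟩
  have hu : u ≤ 0 := by simpa using hT' 0 fun _ => le_rfl
  -- `S` is unbounded in the direction of decreasing loads, so `a ≥ 0`.
  have ha0 : ∀ e, 0 ≤ a e := by
    intro e
    by_contra! hneg
    set k : ℝ := (|b * (M + 1)| + 1) / (-a e) with hk
    have hk0 : 0 < k := div_pos (by positivity) (by linarith)
    have h := hS' (Pi.single e (-k)) (M + 1) (fun i => by
      by_cases hi : i = e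
      · subst hi; simpa using (neg_lt_zero.2 hk0).trans (hσ i)
      · simpa [hi] using hσ i) (by linarith)
    have h1 : ∑ i, (Pi.single e (-k) : E → ℝ) i * a i = |b * (M + 1)| + 1 := by
      rw [Finset.sum_eq_single e (fun i _ hi => by simp [hi]) (by simp), Pi.single_eq_same, hk]
      field_simp [hneg.ne]
    rw [h1] at h
    linarith [le_abs_self (b * (M + 1))]
  have hMnn : 0 ≤ M := Finset.sum_nonneg fun p _ => hmem.1 p
  have hb0 : 0 < b := by
    have h := hS' (fun _ => 0) (M + 1) hσ (by linarith)
    simp only [zero_mul, Finset.sum_const_zero] at h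
    nlinarith
  have hSσ : 0 ≤ ∑ e, σ e * a e := Finset.sum_nonneg fun e _ => mul_nonneg (hσ e).le (ha0 e)
  -- The point `(σ, M)` lies in the closure of `S`.
  have hen : ∑ e, σ e * a e ≤ b * M := by
    by_contra! hlt
    set A : ℝ := ∑ e, σ e * a e with hA
    set ε : ℝ := (A - b * M) / (A + b + (A - b * M)) with hε
    have hden : 0 < A + b + (A - b * M) := by linarith
    have hε0 : 0 < ε := div_pos (by linarith) hden
    have hεeq : ε * (A + b + (A - b * M)) = A - b * M := div_mul_cancel₀ _ hden.ne'
    have h := hS' (fun e => (1 - ε) * σ e) (M + ε)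
      (fun e => by nlinarith [mul_pos hε0 (hσ e)]) (by linarith)
    have h1 : ∑ e, (1 - ε) * σ e * a e = (1 - ε) * A := by
      rw [hA, Finset.mul_sum]
      exact Finset.sum_congr rfl fun e _ => by ring
    rw [h1] at h
    nlinarith [mul_pos hε0 (sub_pos.2 hlt)]
  -- A functional bounded below on a cone is nonnegative there.
  have hlen : ∀ p, b ≤ ∑ e, N p e * a e := by
    intro p
    by_contra! hlt
    set d : ℝ := b - ∑ e, N p e * a e with hd
    have hd0 : 0 < d := by linarith
    set k : ℝ := (1 - u) / d with hk
    have hk0 : 0 ≤ k := div_nonneg (by linarith) hd0.le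
    have hkd : k * d = 1 - u := div_mul_cancel₀ _ hd0.ne'
    have h := hT' (Pi.single p k) (fun q => by
      by_cases hq : q = p
      · subst hq; simpa using hk0
      · simp [hq])
    have h1 : ∀ e, ∑ q, N q e * (Pi.single p k : P → ℝ) q = N p e * k := fun e => by
      rw [Finset.sum_eq_single p (fun i _ hi => by simp [hi]) (by simp), Pi.single_eq_same]
    have h2 : ∑ e, N p e * k * a e = k * ∑ e, N p e * a e := by
      rw [Finset.mul_sum]
      exact Finset.sum_congr rfl fun e _ => by ring
    simp only [h1, h2, Finset.sum_pi_single', Finset.mem_univ, if_true] at h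
    have h3 : k * ∑ e, N p e * a e - b * k = -(k * d) := by rw [hd]; ring
    rw [h3, hkd] at h
    linarith
  refine ⟨fun e => a e / b, fun e => div_nonneg (ha0 e) hb0.le, fun p => ?_, ?_⟩
  · simp_rw [← mul_div_assoc]
    rw [← Finset.sum_div, one_le_div hb0]
    exact hlen p
  · simp_rw [← mul_div_assoc]
    rw [← Finset.sum_div, div_le_iff₀ hb0]
    linarith

end PackingCovering

/-- Loop erasure does not increase length: the remaining edges form a sublist of the original ones. -/
lemma rhoLength_bypass_le (G : SimpleGraph V) [DecidableRel G.Adj]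
    (ρ : G.edgeSet → ℝ) (hρ : ∀ e, 0 ≤ ρ e) {u v : V} (w : G.Walk u v) :
    rhoLength G ρ w.bypass ≤ rhoLength G ρ w := by
  refine Finset.sum_le_sum fun e _ => mul_le_mul_of_nonneg_right ?_ (hρ e)
  exact_mod_cast w.edges_bypass_sublist_edges.count_le _

/-- Mod_1(Γ(s,t)) equals the maximal flow value, where a flow is a
nonnegative function λ on the (finite) family of simple s–t paths satisfying the
capacity constraints Σ_γ N(γ,e) λ(γ) ≤ σ(e) on every edge. -/
theorem modulus_one_eq_maxflow
    (G : SimpleGraph V) [DecidableRel G.Adj]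
    (σ : G.edgeSet → ℝ) (hσ : ∀ e, 0 < σ e)
    (s t : V) (hst : s ≠ t) :
    IsGreatest {x : ℝ | ∃ lam : G.Path s t → ℝ,
        (∀ γ, 0 ≤ lam γ) ∧
        (∀ e : G.edgeSet,
          ∑ γ : G.Path s t, ((γ : G.Walk s t).edges.count ↑e : ℝ) * lam γ ≤ σ e) ∧
        x = ∑ γ : G.Path s t, lam γ}
      (modulus G σ 1 (connectingFamily G s t)) := by
  -- Multiplicity of the edge `e` in the path `γ`.
  let N : G.Path s t → G.edgeSet → ℝ := fun γ e => ((γ : G.Walk s t).edges.count ↑e : ℝ)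
  have hN : ∀ γ e, 0 ≤ N γ e := fun γ e => Nat.cast_nonneg _
  have hN1 : ∀ γ, ∃ e, 1 ≤ N γ e := by
    intro γ
    obtain ⟨e, he⟩ : ∃ e, e ∈ (γ : G.Walk s t).edges := by
      apply List.exists_mem_of_ne_nil
      intro h
      exact hst (SimpleGraph.Walk.edges_eq_nil.1 h).eq
    refine ⟨⟨e, SimpleGraph.Walk.edges_subset_edgeSet _ he⟩, ?_⟩
    exact Nat.one_le_cast.2 (List.one_le_count_iff.2 he)
  have henergy : ∀ ρ : G.edgeSet → ℝ, (∀ e, 0 ≤ ρ e) → energy G σ 1 ρ = ∑ e, σ e * ρ e :=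
    fun ρ hρ => Finset.sum_congr rfl fun e _ => by rw [Real.rpow_one, abs_of_nonneg (hρ e)]
  have hweak : ∀ lam : G.Path s t → ℝ, (∀ γ, 0 ≤ lam γ) → (∀ e, ∑ γ, N γ e * lam γ ≤ σ e) →
      ∀ x ∈ energy G σ 1 '' {ρ | IsAdmissible G (connectingFamily G s t) ρ}, ∑ γ, lam γ ≤ x := by
    rintro lam h0 h1 _ ⟨ρ, hρ, rfl⟩
    rw [henergy ρ hρ.1]
    exact flow_value_le_energy N σ lam ρ h0 h1 hρ.1 fun γ => hρ.2 ⟨s, t, γ⟩ ⟨rfl, rfl⟩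
  obtain ⟨lam, ⟨h0, h1⟩, ρ, hρ0, hρ1, hle⟩ := exists_flow_exists_density N hN hN1 σ hσ
  have hadm : IsAdmissible G (connectingFamily G s t) ρ := by
    refine ⟨hρ0, ?_⟩
    rintro ⟨_, _, w⟩ ⟨rfl, rfl⟩
    exact (hρ1 w.toPath).trans (rhoLength_bypass_le G ρ hρ0 w)
  have hmem : energy G σ 1 ρ ∈ energy G σ 1 '' {ρ | IsAdmissible G (connectingFamily G s t) ρ} :=
    ⟨ρ, hadm, rfl⟩
  refine ⟨⟨lam, h0, h1, le_antisymm ?_ ?_⟩, ?_⟩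
  · exact (csInf_le ⟨_, hweak lam h0 h1⟩ hmem).trans ((henergy ρ hρ0).trans_le hle)
  · exact le_csInf ⟨_, hmem⟩ (hweak lam h0 h1)
  · rintro _ ⟨μ, hμ0, hμ1, rfl⟩
    exact le_csInf ⟨_, hmem⟩ (hweak μ hμ0 hμ1)
end

section
/- Let G=(V,E,σ) be a finite weighted graph and let Γ be a nonempty family of walks on G. Then the function p ↦ Mod_p(Γ) is continuous on [1,∞). -/
/-!
Replacing a density `ρ` by `min ρ 1` preserves admissibility, because a walk that crosses an edge
with `ρ ≥ 1` still has length at least one while every other walk keeps its length, and it does not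
increase the energy (`modulus_eq_sInf_truncated`). Hence the modulus is the infimum of the energy
over the compact set `A(Γ) ∩ [0,1]^E`, which does not depend on `p`. The energy is jointly
continuous in `(p, ρ)` for `p > 0`, and the infimum of a jointly continuous function over a fixed
compact set depends continuously on the parameter.
-/

open scoped BigOperators

variable {V : Type*} [Fintype V] [DecidableEq V]

/-- The admissible densities bounded by one. -/
def truncatedAdmissible (G : SimpleGraph V) [DecidableRel G.Adj]
    (Γ : Set (Σ (u : V) (v : V), G.Walk u v)) : Set (G.edgeSet → ℝ) :=
  {ρ | IsAdmissible G Γ ρ ∧ ∀ e, ρ e ≤ 1}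

lemma isCompact_truncatedAdmissible (G : SimpleGraph V) [DecidableRel G.Adj]
    (Γ : Set (Σ (u : V) (v : V), G.Walk u v)) : IsCompact (truncatedAdmissible G Γ) := by
  have hclosed : IsClosed {ρ : G.edgeSet → ℝ | ∀ γ ∈ Γ, 1 ≤ rhoLength G ρ γ.2.2} := by
    simp only [Set.ofPred_forall]
    refine isClosed_iInter fun γ => isClosed_iInter fun _ => ?_
    refine isClosed_le continuous_const ?_
    unfold rhoLength
    fun_prop
  have hEq : truncatedAdmissible G Γ =
      Set.Icc 0 1 ∩ {ρ : G.edgeSet → ℝ | ∀ γ ∈ Γ, 1 ≤ rhoLength G ρ γ.2.2} := by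
    ext ρ
    simp only [truncatedAdmissible, IsAdmissible, Set.mem_ofPred_eq, Set.mem_inter_iff,
      Set.mem_Icc, Pi.le_def, Pi.zero_apply, Pi.one_apply]
    tauto
  rw [hEq]
  exact isCompact_Icc.inter_right hclosed

lemma min_one_mem_truncatedAdmissible (G : SimpleGraph V) [DecidableRel G.Adj]
    {Γ : Set (Σ (u : V) (v : V), G.Walk u v)} {ρ : G.edgeSet → ℝ} (hρ : IsAdmissible G Γ ρ) :
    (fun e => min (ρ e) 1) ∈ truncatedAdmissible G Γ := by
  have h0 : ∀ e, 0 ≤ min (ρ e) 1 := fun e => le_min (hρ.1 e) zero_le_one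
  refine ⟨⟨h0, fun γ hγ => ?_⟩, fun e => min_le_right _ _⟩
  by_cases h : ∃ e : G.edgeSet, 0 < γ.2.2.edges.count (e : Sym2 V) ∧ 1 ≤ ρ e
  · obtain ⟨e, hc, he⟩ := h
    have hc' : (1 : ℝ) ≤ γ.2.2.edges.count (e : Sym2 V) := by exact_mod_cast hc
    calc (1 : ℝ) ≤ (γ.2.2.edges.count (e : Sym2 V) : ℝ) * min (ρ e) 1 := by
          rw [min_eq_right he, mul_one]
          exact hc'
      _ ≤ rhoLength G (fun e => min (ρ e) 1) γ.2.2 :=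
          Finset.single_le_sum
            (f := fun e : G.edgeSet => (γ.2.2.edges.count (e : Sym2 V) : ℝ) * min (ρ e) 1)
            (fun i _ => mul_nonneg (Nat.cast_nonneg _) (h0 i)) (Finset.mem_univ e)
  · push Not at h
    refine (hρ.2 γ hγ).trans_eq (Finset.sum_congr rfl fun e _ => ?_)
    rcases Nat.eq_zero_or_pos (γ.2.2.edges.count (e : Sym2 V)) with hc | hc
    · simp [hc]
    · exact congrArg _ (min_eq_left (h e hc).le).symm

lemma modulus_eq_sInf_truncated (G : SimpleGraph V) [DecidableRel G.Adj]
    (σ : G.edgeSet → ℝ) (hσ : ∀ e, 0 < σ e)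
    (Γ : Set (Σ (u : V) (v : V), G.Walk u v)) {p : ℝ} (hp : 0 ≤ p) :
    modulus G σ p Γ = sInf (energy G σ p '' truncatedAdmissible G Γ) := by
  have hbdd : ∀ S : Set (G.edgeSet → ℝ), BddBelow (energy G σ p '' S) := by
    rintro S
    refine ⟨0, ?_⟩
    rintro _ ⟨ρ, -, rfl⟩
    exact Finset.sum_nonneg fun e _ => mul_nonneg (hσ e).le (by positivity)
  unfold modulus
  rcases Set.eq_empty_or_nonempty {ρ | IsAdmissible G Γ ρ} with hA | ⟨ρ₀, hρ₀⟩
  · have hK : truncatedAdmissible G Γ = ∅ :=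
      Set.subset_eq_empty (fun ρ hρ => hρ.1) hA
    rw [hA, hK]
  · apply le_antisymm
    · exact csInf_le_csInf (hbdd _) (Set.Nonempty.image _ ⟨_, min_one_mem_truncatedAdmissible G hρ₀⟩)
        (Set.image_mono fun ρ hρ => hρ.1)
    · refine le_csInf (Set.Nonempty.image _ ⟨ρ₀, hρ₀⟩) ?_
      rintro _ ⟨ρ, hρ, rfl⟩
      refine (csInf_le (hbdd _) ⟨_, min_one_mem_truncatedAdmissible G hρ, rfl⟩).trans ?_
      refine Finset.sum_le_sum fun e _ => mul_le_mul_of_nonneg_left ?_ (hσ e).le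
      refine Real.rpow_le_rpow (abs_nonneg _) ?_ hp
      rw [abs_of_nonneg (le_min (hρ.1 e) zero_le_one), abs_of_nonneg (hρ.1 e)]
      exact min_le_left _ _

/-- the function p ↦ Mod_p(Γ) is continuous on [1, ∞). -/
theorem modulus_continuousOn_p
    (G : SimpleGraph V) [DecidableRel G.Adj]
    (σ : G.edgeSet → ℝ) (hσ : ∀ e, 0 < σ e)
    (Γ : Set (Σ (u : V) (v : V), G.Walk u v))
    (hne : Γ.Nonempty) (hΓ : ∀ γ ∈ Γ, 0 < γ.2.2.length) :
    ContinuousOn (fun p : ℝ => modulus G σ p Γ) (Set.Ici 1) := by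
  -- Clamping the exponent to `max p 1` makes the energy jointly continuous on all of `ℝ × ℝ^E`.
  have hcont : Continuous
      (Function.uncurry fun (p : ℝ) (ρ : G.edgeSet → ℝ) => energy G σ (max p 1) ρ) := by
    unfold energy Function.uncurry
    refine continuous_finsetSum _ fun e _ => continuous_const.mul ?_
    exact Continuous.rpow (by fun_prop) (by fun_prop)
      fun x => Or.inr (lt_of_lt_of_le one_pos (le_max_right _ _))
  refine ((isCompact_truncatedAdmissible G Γ).continuous_sInf
    (f := fun (p : ℝ) (ρ : G.edgeSet → ℝ) => energy G σ (max p 1) ρ) hcont).continuousOn.congr ?_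
  intro p hp
  have hp1 : (1 : ℝ) ≤ p := hp
  simp only [max_eq_left hp1]
  exact modulus_eq_sInf_truncated G σ hσ Γ (zero_le_one.trans hp1)
end

section
/- Let G=(V,E,σ) be a finite weighted graph with σ_min = min_{e∈E} σ(e) > 0, let Γ be a nonempty family of walks on G, let 1 < p ≤ 2, set p' = p/(p−1), and let ρ* be the unique extremal density for Mod_p(Γ). Then for every admissible ρ ∈ A(Γ), ‖ρ − ρ*‖_p^{p'} ≤ (2^p/σ_min)^{p'/p} · [ (Mod_p(Γ) + (1/2)(ℰ_p(ρ) − Mod_p(Γ)))^{p'/p} − Mod_p(Γ)^{p'/p} ], where ‖f‖_p = (Σ_{e∈E} |f(e)|^p)^{1/p} is the unweighted p-norm on ℝ^E. -/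
/-!
The estimate is Clarkson's second inequality for `1 < p ≤ 2`, with `s = p' / p = 1 / (p - 1)`,
in the weighted space `ℓ^p(σ)`:
`ℰ((f + g) / 2) ^ s + ℰ((f - g) / 2) ^ s ≤ ((ℰ f + ℰ g) / 2) ^ s`.
Applied to `f = ρ` and `g = ρ*`, the midpoint is admissible, so its energy is at least the modulus;
bounding `ℰ((ρ - ρ*) / 2)` below by `σ_min 2⁻ᵖ ‖ρ - ρ*‖_p^p` then gives the claim.

Clarkson's inequality follows from its two-number version (`clarkson_scalar`) by summing over the
edges and applying Minkowski's inequality in `ℓ^s` of a two-point set to the vectors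
`(σ |f + g|^p / 2^p, σ |f - g|^p / 2^p)` (`minkowski_pair_sum`).  By homogeneity the two-number
version reduces to `2 (1 + u ^ p') ^ (p - 1) ≤ (1 + u) ^ p + (1 - u) ^ p` on `[0, 1]`
(`clarkson_unit`).  Both sides of that are values of
`α ↦ (1 + α ^ (1 - p) u) (1 + α u) ^ (p - 1) + (1 - α ^ (1 - p) u) (1 - α u) ^ (p - 1)`,
at `α = u ^ (1 / (p - 1))` and at `α = 1`, and this function is nondecreasing on `(0, 1]`.
-/


open scoped BigOperators

variable {V : Type*} [Fintype V] [DecidableEq V]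

/-- The derivative in `α` of the function interpolating between the two sides of
`clarkson_unit`. -/
lemma clarkson_interp_hasDerivAt (p u α : ℝ) (hu : 0 ≤ u) (hu1 : u < 1)
    (hα : 0 < α) (hα1 : α ≤ 1) :
    HasDerivAt (fun α : ℝ => (1 + α ^ (1 - p) * u) * (1 + α * u) ^ (p - 1)
        + (1 - α ^ (1 - p) * u) * (1 - α * u) ^ (p - 1))
      ((p - 1) * u * (1 - α ^ (-p)) * ((1 + α * u) ^ (p - 2) - (1 - α * u) ^ (p - 2))) α := by
  have h1 : 0 < 1 + α * u := by positivity
  have h2 : 0 < 1 - α * u := by nlinarith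
  have dα : HasDerivAt (fun α : ℝ => α ^ (1 - p) * u) ((1 - p) * α ^ (1 - p - 1) * u) α :=
    (Real.hasDerivAt_rpow_const (Or.inl hα.ne')).mul_const u
  have dl : HasDerivAt (fun α : ℝ => α * u) u α := by
    simpa using (hasDerivAt_id α).mul_const u
  have dp := (dl.const_add 1).rpow_const (p := p - 1) (Or.inl h1.ne')
  have dm := (dl.const_sub 1).rpow_const (p := p - 1) (Or.inl h2.ne')
  have key := ((dα.const_add 1).mul dp).add ((dα.const_sub 1).mul dm)
  refine key.congr_deriv ?_
  have e1 : (1 + α * u) ^ (p - 1) = (1 + α * u) ^ (p - 2) * (1 + α * u) := by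
    rw [← Real.rpow_add_one h1.ne']; ring_nf
  have e2 : (1 - α * u) ^ (p - 1) = (1 - α * u) ^ (p - 2) * (1 - α * u) := by
    rw [← Real.rpow_add_one h2.ne']; ring_nf
  have e3 : α ^ (1 - p) = α ^ (-p) * α := by
    rw [← Real.rpow_add_one hα.ne']; ring_nf
  have e4 : (1 - p - 1 : ℝ) = -p := by ring
  have e5 : (p - 1 - 1 : ℝ) = p - 2 := by ring
  rw [e4, e5, e1, e2, e3]
  ring

/-- Clarkson's two-number inequality for the pair `1 + u`, `1 - u`. -/
lemma clarkson_unit {p u : ℝ} (hp1 : 1 < p) (hp2 : p ≤ 2) (hu : 0 ≤ u) (hu1 : u ≤ 1) :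
    2 * (1 + u ^ (p * (p - 1)⁻¹)) ^ (p - 1) ≤ (1 + u) ^ p + (1 - u) ^ p := by
  have hp : 0 < p - 1 := by linarith
  have hp0 : p ≠ 0 := by linarith
  rcases hu.eq_or_lt with rfl | hu0
  · have : p * (p - 1)⁻¹ ≠ 0 := by positivity
    simp [Real.zero_rpow this]
    norm_num
  rcases hu1.eq_or_lt with rfl | hu1
  · rw [Real.one_rpow, sub_self, Real.zero_rpow hp0, Real.rpow_sub_one (by norm_num)]
    norm_num
    linarith
  set β := u ^ (p - 1)⁻¹ with hβ
  have hβ0 : 0 < β := Real.rpow_pos_of_pos hu0 _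
  have hβ1 : β ≤ 1 := Real.rpow_le_one hu hu1.le (by positivity)
  have hder : ∀ α ∈ Set.Icc β 1, _ := fun α hα =>
    clarkson_interp_hasDerivAt p u α hu hu1 (hβ0.trans_le hα.1) hα.2
  have hmono : MonotoneOn (fun α : ℝ => (1 + α ^ (1 - p) * u) * (1 + α * u) ^ (p - 1)
        + (1 - α ^ (1 - p) * u) * (1 - α * u) ^ (p - 1)) (Set.Icc β 1) := by
    refine monotoneOn_of_deriv_nonneg (convex_Icc β 1)
      (fun α hα => (hder α hα).continuousAt.continuousWithinAt)
      (fun α hα => (hder α (interior_subset hα)).differentiableAt.differentiableWithinAt) ?_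
    intro α hα
    have hα := interior_subset hα
    have hα0 : 0 < α := hβ0.trans_le hα.1
    have hm : 0 < 1 - α * u := by nlinarith [hα.2]
    rw [(hder α hα).deriv]
    -- Both factors are nonpositive, because `-p` and `p - 2` are.
    have h1 : 1 ≤ α ^ (-p) := Real.one_le_rpow_of_pos_of_le_one_of_nonpos hα0 hα.2 (by linarith)
    have h2 : (1 + α * u) ^ (p - 2) ≤ (1 - α * u) ^ (p - 2) :=
      Real.rpow_le_rpow_of_nonpos hm (by nlinarith) (by linarith)
    rw [mul_assoc]
    exact mul_nonneg (by positivity) (mul_nonneg_of_nonpos_of_nonpos (by linarith) (by linarith))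
  have h := hmono ⟨le_rfl, hβ1⟩ ⟨hβ1, le_rfl⟩ hβ1
  have e1 : β ^ (1 - p) * u = 1 := by
    rw [hβ, ← Real.rpow_mul hu, show (p - 1)⁻¹ * (1 - p) = -1 by field_simp; ring,
      Real.rpow_neg_one, inv_mul_cancel₀ hu0.ne']
  have e2 : β * u = u ^ (p * (p - 1)⁻¹) := by
    rw [hβ, ← Real.rpow_add_one hu0.ne']
    congr 1
    field_simp
    ring
  have e3 : (1 + u) * (1 + u) ^ (p - 1) = (1 + u) ^ p := by
    rw [mul_comm, ← Real.rpow_add_one (by linarith)]; ring_nf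
  have e4 : (1 - u) * (1 - u) ^ (p - 1) = (1 - u) ^ p := by
    rw [mul_comm, ← Real.rpow_add_one (by linarith)]; ring_nf
  simp only [e1, e2, Real.one_rpow, one_mul, e3, e4, sub_self, zero_mul, add_zero] at h
  linarith

/-- Clarkson's two-number inequality for nonnegative numbers, with the powers `p'` written as
`(p - 1)⁻¹`-th powers of `p`-th powers. -/
lemma clarkson_scalar {p a b : ℝ} (hp1 : 1 < p) (hp2 : p ≤ 2) (ha : 0 ≤ a) (hb : 0 ≤ b) :
    ((|(a + b) / 2| ^ p) ^ (p - 1)⁻¹ + (|(a - b) / 2| ^ p) ^ (p - 1)⁻¹) ^ (p - 1)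
      ≤ (|a| ^ p + |b| ^ p) / 2 := by
  wlog hab : b ≤ a generalizing a b
  · have := this hb ha (le_of_not_ge hab)
    rwa [add_comm b a, add_comm (|b| ^ p), show (b - a) / 2 = -((a - b) / 2) by ring,
      abs_neg] at this
  have hp : 0 < p - 1 := by linarith
  have hs : 0 < (p - 1)⁻¹ := by positivity
  obtain ⟨x, hx⟩ : ∃ x, x = (a + b) / 2 := ⟨_, rfl⟩
  obtain ⟨y, hy⟩ : ∃ y, y = (a - b) / 2 := ⟨_, rfl⟩
  have hy0 : 0 ≤ y := by linarith
  have hyx : y ≤ x := by linarith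
  have hx0 : 0 ≤ x := by linarith
  rw [← hx, ← hy, abs_of_nonneg ha, abs_of_nonneg hb, abs_of_nonneg hx0, abs_of_nonneg hy0,
    ← Real.rpow_mul hx0, ← Real.rpow_mul hy0]
  rcases hx0.eq_or_lt with h0 | hxp
  · have hy' : y = 0 := by linarith
    rw [hy', ← h0, Real.zero_rpow (by positivity), add_zero, Real.zero_rpow hp.ne']
    positivity
  obtain ⟨u, rfl⟩ : ∃ u, y = x * u := ⟨y / x, by field_simp⟩
  have hu : 0 ≤ u := nonneg_of_mul_nonneg_right hy0 hxp
  have hu1 : u ≤ 1 := by nlinarith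
  have key := clarkson_unit hp1 hp2 hu hu1
  have hA : a = x * (1 + u) := by linarith
  have hB : b = x * (1 - u) := by linarith
  have e : (x ^ (p * (p - 1)⁻¹)) ^ (p - 1) = x ^ p := by
    rw [← Real.rpow_mul hx0]
    congr 1
    field_simp
  have hq : 0 ≤ u ^ (p * (p - 1)⁻¹) := Real.rpow_nonneg hu _
  rw [hA, hB, Real.mul_rpow hx0 hu, Real.mul_rpow hx0 (by linarith),
    Real.mul_rpow hx0 (by linarith), ← mul_one_add,
    Real.mul_rpow (Real.rpow_nonneg hx0 _) (by linarith), e]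
  have := mul_le_mul_of_nonneg_left key (Real.rpow_nonneg hx0 p)
  linarith

/-- Minkowski's inequality in `ℓ^s` of a two-point set, for a finite sum of vectors `(X i, Y i)`. -/
lemma minkowski_pair_sum {ι : Type*} (t : Finset ι) {s : ℝ} (hs : 1 ≤ s) (X Y : ι → ℝ)
    (hX : ∀ i, 0 ≤ X i) (hY : ∀ i, 0 ≤ Y i) :
    ((∑ i ∈ t, X i) ^ s + (∑ i ∈ t, Y i) ^ s) ^ (1 / s)
      ≤ ∑ i ∈ t, (X i ^ s + Y i ^ s) ^ (1 / s) := by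
  classical
  have hs0 : s ≠ 0 := by linarith
  induction t using Finset.induction_on with
  | empty => simp [Real.zero_rpow hs0, Real.zero_rpow (inv_ne_zero hs0)]
  | insert i t hi ih =>
    rw [Finset.sum_insert hi, Finset.sum_insert hi, Finset.sum_insert hi]
    have h := Real.Lp_add_le_of_nonneg (s := (Finset.univ : Finset (Fin 2)))
      (f := ![X i, Y i]) (g := ![∑ j ∈ t, X j, ∑ j ∈ t, Y j]) hs
      (by intro j _; fin_cases j <;> simp [hX, hY])
      (by intro j _; fin_cases j <;> simp [Finset.sum_nonneg, hX, hY])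
    simp only [Fin.sum_univ_two, Matrix.cons_val_zero, Matrix.cons_val_one] at h
    linarith

/-- Clarkson's second inequality for the weighted energy of nonnegative densities. -/
lemma clarkson_energy (G : SimpleGraph V)
    [DecidableRel G.Adj] (σ : G.edgeSet → ℝ) (hσ : ∀ e, 0 < σ e) {p : ℝ} (hp1 : 1 < p)
    (hp2 : p ≤ 2) (f g : G.edgeSet → ℝ) (hf : ∀ e, 0 ≤ f e) (hg : ∀ e, 0 ≤ g e) :
    energy G σ p (fun e => (f e + g e) / 2) ^ (p - 1)⁻¹
        + energy G σ p (fun e => (f e - g e) / 2) ^ (p - 1)⁻¹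
      ≤ ((energy G σ p f + energy G σ p g) / 2) ^ (p - 1)⁻¹ := by
  have hp : 0 < p - 1 := by linarith
  have hs : 1 ≤ (p - 1)⁻¹ := (one_le_inv₀ hp).2 (by linarith)
  have hnn : ∀ x : ℝ, 0 ≤ |x| ^ p := fun x => Real.rpow_nonneg (abs_nonneg x) p
  have hE : ∀ h : G.edgeSet → ℝ, 0 ≤ energy G σ p h := fun h =>
    Finset.sum_nonneg fun e _ => mul_nonneg (hσ e).le (hnn _)
  have hM := minkowski_pair_sum Finset.univ hs
    (fun e => σ e * |(f e + g e) / 2| ^ p) (fun e => σ e * |(f e - g e) / 2| ^ p)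
    (fun e => mul_nonneg (hσ e).le (hnn _)) (fun e => mul_nonneg (hσ e).le (hnn _))
  rw [one_div, inv_inv] at hM
  have hS : ∑ e, ((σ e * |(f e + g e) / 2| ^ p) ^ (p - 1)⁻¹
      + (σ e * |(f e - g e) / 2| ^ p) ^ (p - 1)⁻¹) ^ (p - 1)
      ≤ (energy G σ p f + energy G σ p g) / 2 := by
    rw [energy, energy, ← Finset.sum_add_distrib, Finset.sum_div]
    refine Finset.sum_le_sum fun e _ => ?_
    have hσe := (hσ e).le
    have hA := Real.rpow_nonneg (hnn ((f e + g e) / 2)) (p - 1)⁻¹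
    have hB := Real.rpow_nonneg (hnn ((f e - g e) / 2)) (p - 1)⁻¹
    rw [Real.mul_rpow hσe (hnn _), Real.mul_rpow hσe (hnn _), ← mul_add,
      Real.mul_rpow (Real.rpow_nonneg hσe _) (add_nonneg hA hB),
      Real.rpow_inv_rpow hσe hp.ne']
    have := mul_le_mul_of_nonneg_left (clarkson_scalar hp1 hp2 (hf e) (hg e)) hσe
    linarith
  have hpos : 0 ≤ energy G σ p (fun e => (f e + g e) / 2) ^ (p - 1)⁻¹
      + energy G σ p (fun e => (f e - g e) / 2) ^ (p - 1)⁻¹ :=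
    add_nonneg (Real.rpow_nonneg (hE _) _) (Real.rpow_nonneg (hE _) _)
  have h := Real.rpow_le_rpow (Real.rpow_nonneg hpos _) (hM.trans hS) (inv_nonneg.2 hp.le)
  rwa [Real.rpow_rpow_inv hpos hp.ne'] at h

/-- (Clarkson, 1 < p ≤ 2) with p' = p/(p-1), for the extremal density ρ*
and any admissible ρ,
‖ρ-ρ*‖_p^{p'} ≤ (2^p/σ_min)^{p'/p} [(Mod_p(Γ) + ½(ℰ_p(ρ)-Mod_p(Γ)))^{p'/p} - Mod_p(Γ)^{p'/p}]. -/
theorem clarkson_estimate_p_le_two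
    (G : SimpleGraph V) [DecidableRel G.Adj] [Nonempty ↥G.edgeSet]
    (σ : G.edgeSet → ℝ) (hσ : ∀ e, 0 < σ e)
    (Γ : Set (Σ (u : V) (v : V), G.Walk u v))
    (hne : Γ.Nonempty) (hΓ : ∀ γ ∈ Γ, 0 < γ.2.2.length)
    (p : ℝ) (hp1 : 1 < p) (hp2 : p ≤ 2)
    (ρstar : G.edgeSet → ℝ)
    (hadm : IsAdmissible G Γ ρstar)
    (hext : energy G σ p ρstar = modulus G σ p Γ)
    (ρ : G.edgeSet → ℝ) (hρ : IsAdmissible G Γ ρ) :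
    (∑ e : G.edgeSet, |ρ e - ρstar e| ^ p) ^ ((p / (p - 1)) / p)
      ≤ ((2 : ℝ) ^ p / ⨅ e : G.edgeSet, σ e) ^ ((p / (p - 1)) / p)
          * ((modulus G σ p Γ
                + (1 / 2) * (energy G σ p ρ - modulus G σ p Γ)) ^ ((p / (p - 1)) / p)
              - (modulus G σ p Γ) ^ ((p / (p - 1)) / p)) := by
  have hp : 0 < p - 1 := by linarith
  have hs0 : 0 ≤ (p - 1)⁻¹ := inv_nonneg.2 hp.le
  have hnn : ∀ x : ℝ, 0 ≤ |x| ^ p := fun x => Real.rpow_nonneg (abs_nonneg x) p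
  have hE : ∀ h : G.edgeSet → ℝ, 0 ≤ energy G σ p h := fun h =>
    Finset.sum_nonneg fun e _ => mul_nonneg (hσ e).le (hnn _)
  rw [show p / (p - 1) / p = (p - 1)⁻¹ by field_simp]
  set m := ⨅ e : G.edgeSet, σ e with hm
  have hm0 : 0 < m := by
    obtain ⟨e, he⟩ := exists_eq_ciInf_of_finite (f := σ)
    rw [hm, ← he]
    exact hσ e
  have hmle : ∀ e, m ≤ σ e := fun e => ciInf_le (Set.finite_range σ).bddBelow e
  have hmid : IsAdmissible G Γ (fun e => (ρ e + ρstar e) / 2) := by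
    refine ⟨fun e => by linarith [hρ.1 e, hadm.1 e], fun γ hγ => ?_⟩
    have h1 := hρ.2 γ hγ
    have h2 := hadm.2 γ hγ
    have h3 : rhoLength G (fun e => (ρ e + ρstar e) / 2) γ.2.2
        = (rhoLength G ρ γ.2.2 + rhoLength G ρstar γ.2.2) / 2 := by
      simp only [rhoLength]
      rw [← Finset.sum_add_distrib, Finset.sum_div]
      exact Finset.sum_congr rfl fun e _ => by ring
    rw [h3]
    linarith
  have hmod : modulus G σ p Γ ≤ energy G σ p (fun e => (ρ e + ρstar e) / 2) :=
    csInf_le ⟨0, by rintro _ ⟨h, -, rfl⟩; exact hE h⟩ ⟨_, hmid, rfl⟩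
  have hM0 : 0 ≤ modulus G σ p Γ := hext ▸ hE ρstar
  have hC := clarkson_energy G σ hσ hp1 hp2 ρ ρstar hρ.1 hadm.1
  have hmod' := Real.rpow_le_rpow hM0 hmod hs0
  rw [hext, show (energy G σ p ρ + modulus G σ p Γ) / 2
    = modulus G σ p Γ + 1 / 2 * (energy G σ p ρ - modulus G σ p Γ) by ring] at hC
  have h2p : (0 : ℝ) < 2 ^ p := by positivity
  have hdiff : ∑ e : G.edgeSet, |ρ e - ρstar e| ^ p
      ≤ 2 ^ p / m * energy G σ p (fun e => (ρ e - ρstar e) / 2) := by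
    rw [energy, Finset.mul_sum]
    refine Finset.sum_le_sum fun e _ => ?_
    rw [abs_div, abs_two, Real.div_rpow (abs_nonneg _) zero_le_two]
    have h1 : 1 ≤ σ e / m := (one_le_div hm0).2 (hmle e)
    calc |ρ e - ρstar e| ^ p ≤ σ e / m * |ρ e - ρstar e| ^ p := le_mul_of_one_le_left (hnn _) h1
      _ = _ := by field_simp
  calc (∑ e : G.edgeSet, |ρ e - ρstar e| ^ p) ^ (p - 1)⁻¹
      ≤ (2 ^ p / m * energy G σ p (fun e => (ρ e - ρstar e) / 2)) ^ (p - 1)⁻¹ :=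
        Real.rpow_le_rpow (Finset.sum_nonneg fun e _ => hnn _) hdiff hs0
    _ = (2 ^ p / m) ^ (p - 1)⁻¹ * energy G σ p (fun e => (ρ e - ρstar e) / 2) ^ (p - 1)⁻¹ :=
        Real.mul_rpow (by positivity) (hE _)
    _ ≤ _ := mul_le_mul_of_nonneg_left (by linarith) (by positivity)
end
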